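/- (Lemma 2.3, bilinear estimate.) There is an absolute constant C such that: if f = f(t,·) is Schwartz in x for each t ≥ 1 and satisfies sup_{t≥1}( t^{-1/6}‖x f(t)‖_{L²} + ‖f̂(t,·)‖_{L^∞} ) ≤ ε₁, then u(t,x) = (2π)^{-1/2}∫_ℝ e^{i(xξ+tξ³)} f̂(t,ξ) dξ satisfies sup_{t≥1} t · ‖u(t) ∂_x u(t)‖_{L^∞(ℝ)} ≤ C ε₁². -/

import Mathlib

/-!
Rescaling frequencies by `τ = t^{-1/3}` reduces the claim to time `1`: for `H(η) = FT f (τ η)` one has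
`|H| ≤ ε₁` and `‖H'‖₂ ≤ ε₁` (Plancherel), and `t τ³ = 1` absorbs the factor `t`. It remains to bound
the product of `∫ e^{iφ} H` and `∫ e^{iφ} η H`, where `φ(η) = yη + η³`, by a multiple of `ε₁²`,
uniformly in `y`.

Let `R = max(1, √|y|)`. Instead of cutting off near the stationary points, one uses the smooth
amplitude `a = m φ' / (φ'² + R)` with `m = 1` or `m = η`: the part `m - a φ'` is estimated in absolute
value, and the part `a φ'` is integrated by parts, producing `a' H + a H'`
(`oscillatory_bound`). Everything is controlled by the single weight `(R² + η²) / (φ'² + R)`, whose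
integral is `O(√R)` (`weight_bound`). This gives `O(ε₁ R^{-1/2})` for the first integral and
`O(ε₁ R^{1/2})` for the second, so the powers of `R` cancel (`product_bound`).
-/

noncomputable section

open MeasureTheory Real Complex

/-- Fourier transform: ĝ(ξ) = (2π)^{-1/2} ∫ e^{-ixξ} g(x) dx. -/
def FT (g : ℝ → ℂ) (ξ : ℝ) : ℂ :=
  (Real.sqrt (2 * Real.pi) : ℂ)⁻¹ * ∫ x : ℝ, Complex.exp (-(Complex.I * x * ξ)) * g x

/-- L² norm. -/
def L2norm (g : ℝ → ℂ) : ℝ := Real.sqrt (∫ x : ℝ, ‖g x‖ ^ 2)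

/-- L^p norm for a real exponent p. -/
def LpNorm (p : ℝ) (g : ℝ → ℂ) : ℝ := (∫ x : ℝ, ‖g x‖ ^ p) ^ (1/p)

/-- L^∞ norm (as a pointwise supremum). -/
def LinfNorm (g : ℝ → ℂ) : ℝ := ⨆ x : ℝ, ‖g x‖

/-- The free Airy evolution `u(t,x) = (e^{-t∂ₓ³} f)(x) = (2π)^{-1/2} ∫ e^{i(xξ+tξ³)} f̂(ξ) dξ`. -/
def uAiry (g : ℝ → ℂ) (t x : ℝ) : ℂ :=
  (Real.sqrt (2 * Real.pi) : ℂ)⁻¹ *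
    ∫ ξ : ℝ, Complex.exp (Complex.I * (x * ξ + t * ξ ^ 3)) * FT g ξ

/-- The free Airy evolution with a fractional derivative:
`(|∂ₓ|^β e^{-t∂ₓ³} f)(x) = (2π)^{-1/2} ∫ e^{i(xξ+tξ³)} |ξ|^β f̂(ξ) dξ`. -/
def fracAiry (g : ℝ → ℂ) (t β x : ℝ) : ℂ :=
  (Real.sqrt (2 * Real.pi) : ℂ)⁻¹ *
    ∫ ξ : ℝ, Complex.exp (Complex.I * (x * ξ + t * ξ ^ 3)) * ((|ξ| ^ β : ℝ) : ℂ) * FT g ξ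

/-- `(∂ₓ e^{-t∂ₓ³} f)(x) = (2π)^{-1/2} ∫ e^{i(xξ+tξ³)} (iξ) f̂(ξ) dξ`. -/
def derivAiry (g : ℝ → ℂ) (t x : ℝ) : ℂ :=
  (Real.sqrt (2 * Real.pi) : ℂ)⁻¹ *
    ∫ ξ : ℝ, Complex.exp (Complex.I * (x * ξ + t * ξ ^ 3)) * (Complex.I * ξ) * FT g ξ

/-! ### The weight `(R² + η²) / (φ'² + R)` -/

/-- The scale `R = max(1, √|y|)` and the nonnegative stationary point `s` of `yη + η³`, with `s = 0`
when `-1 ≤ y`. The inequality says that the weight is bounded by bumps of width `R^{-1/2}`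
at `± s`. -/
theorem exists_scale (y : ℝ) : ∃ R s : ℝ, 1 ≤ R ∧ |y| ≤ R ^ 2 ∧ ∀ η : ℝ,
    (R ^ 2 + η ^ 2) * ((|η| - s) ^ 2 + 1 / R) ≤ 4 * ((y + 3 * η ^ 2) ^ 2 + R) := by
  by_cases h1 : |y| ≤ 1
  · refine ⟨1, 0, le_rfl, by simpa using h1, fun η => ?_⟩
    obtain ⟨h2, h3⟩ := abs_le.1 h1
    have e : (|η| - 0) ^ 2 = η ^ 2 := by rw [sub_zero, sq_abs]
    rw [e]
    nlinarith [sq_nonneg η, sq_nonneg (y + 3 * η ^ 2 - 1), sq_nonneg (y + 3 * η ^ 2 + 1)]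
  · push Not at h1
    have hR0 : (0 : ℝ) ≤ |y| := abs_nonneg y
    have hR2 : Real.sqrt |y| ^ 2 = |y| := Real.sq_sqrt hR0
    have hR1 : 1 ≤ Real.sqrt |y| := Real.one_le_sqrt.2 h1.le
    set R := Real.sqrt |y| with hR
    have hinv : 1 / R ≤ 1 := by rw [div_le_one (by linarith)]; exact hR1
    have hinv0 : 0 < 1 / R := by positivity
    have hRinv : R ^ 2 * (1 / R) = R := by field_simp
    rcases le_total 0 y with hy | hy
    · refine ⟨R, 0, hR1, hR2.ge, fun η => ?_⟩
      rw [abs_of_nonneg hy] at hR2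
      have e : (|η| - 0) ^ 2 = η ^ 2 := by rw [sub_zero, sq_abs]
      rw [e, ← hR2]
      have : (R ^ 2 + η ^ 2) * (η ^ 2 + 1 / R) ≤ (R ^ 2 + η ^ 2) * (η ^ 2 + R ^ 2) := by
        gcongr; nlinarith
      nlinarith [sq_nonneg η, sq_nonneg R, mul_nonneg (sq_nonneg η) (sq_nonneg R), sq_nonneg (η ^ 2), sq_nonneg (R ^ 2)]
    · refine ⟨R, R / Real.sqrt 3, hR1, hR2.ge, fun η => ?_⟩
      rw [abs_of_nonpos hy] at hR2
      have hs : 3 * (R / Real.sqrt 3) ^ 2 = R ^ 2 := by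
        have h3 : Real.sqrt 3 ^ 2 = 3 := Real.sq_sqrt (by norm_num)
        rw [div_pow, h3, mul_div_cancel₀ _ (by norm_num)]
      have hs0 : 0 ≤ R / Real.sqrt 3 := by positivity
      set s := R / Real.sqrt 3
      have hy' : y = - R ^ 2 := by linarith
      have ha : 0 ≤ |η| := abs_nonneg η
      rw [hy', ← sq_abs η]
      set a := |η|
      set P := -R ^ 2 + 3 * a ^ 2 with hP
      -- the factorisation `P = 3 (a - s) (a + s)` and `(a + s)² ≥ a² + s²`
      have key : 3 * ((R ^ 2 + a ^ 2) * (a - s) ^ 2) ≤ P ^ 2 := by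
        have e1 : P = 3 * (a - s) * (a + s) := by rw [hP, ← hs]; ring
        have e2 : 0 ≤ (a - s) ^ 2 * (6 * a ^ 2 + 18 * (a * s)) := by positivity
        rw [e1, ← hs]; nlinarith
      have key2 : (R ^ 2 + a ^ 2) * (1 / R) ≤ 3 / 2 * (P ^ 2 + R) := by
        have e3 : (R ^ 2 + a ^ 2) * (1 / R) = 4 / 3 * R + P / 3 * (1 / R) := by
          have : a ^ 2 = (P + R ^ 2) / 3 := by rw [hP]; ring
          rw [this]; linear_combination (4/3) * hRinv
        have e4 : P / 3 * (1 / R) ≤ (P ^ 2 + 1) / 6 := by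
          nlinarith [sq_nonneg (P - 1 / R), sq_nonneg (P)]
        nlinarith [sq_nonneg P]
      nlinarith [sq_nonneg P]

theorem bump_integral (R s : ℝ) (hR : 1 ≤ R) :
    Integrable (fun η : ℝ => ((η - s) ^ 2 + 1 / R)⁻¹) ∧
      ∫ η : ℝ, ((η - s) ^ 2 + 1 / R)⁻¹ = π * Real.sqrt R := by
  have h0 : 0 < Real.sqrt R := Real.sqrt_pos.2 (by linarith)
  have h2 : Real.sqrt R ^ 2 = R := Real.sq_sqrt (by linarith)
  have e : (fun η : ℝ => ((η - s) ^ 2 + 1 / R)⁻¹) =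
      fun η : ℝ => R * (fun z => (1 + (Real.sqrt R * z) ^ 2)⁻¹) (η - s) := by
    funext η
    simp only [mul_pow, h2]
    have : 0 < R := by linarith
    field_simp
    ring
  constructor
  · rw [e]
    exact ((integrable_inv_one_add_sq.comp_mul_left' h0.ne').comp_sub_right s).const_mul R
  · rw [e, integral_const_mul, integral_sub_right_eq_self (fun z => (1 + (Real.sqrt R * z) ^ 2)⁻¹) s,
      Measure.integral_comp_mul_left (fun z => (1 + z ^ 2)⁻¹), integral_univ_inv_one_add_sq,
      abs_of_pos (by positivity), smul_eq_mul]
    nth_rw 1 [← h2]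
    field_simp

theorem weight_bound (y : ℝ) : ∃ R : ℝ, 1 ≤ R ∧ |y| ≤ R ^ 2 ∧
    Integrable (fun η : ℝ => (R ^ 2 + η ^ 2) / ((y + 3 * η ^ 2) ^ 2 + R)) ∧
    ∫ η : ℝ, (R ^ 2 + η ^ 2) / ((y + 3 * η ^ 2) ^ 2 + R) ≤ 8 * π * Real.sqrt R := by
  obtain ⟨R, s, hR, hy, h⟩ := exists_scale y
  have hR0 : 0 < 1 / R := by positivity
  have hb (η : ℝ) : (R ^ 2 + η ^ 2) / ((y + 3 * η ^ 2) ^ 2 + R) ≤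
      4 * (((η - s) ^ 2 + 1 / R)⁻¹ + ((η - (-s)) ^ 2 + 1 / R)⁻¹) := by
    have h1 : (R ^ 2 + η ^ 2) / ((y + 3 * η ^ 2) ^ 2 + R) ≤ 4 * ((|η| - s) ^ 2 + 1 / R)⁻¹ := by
      rw [← div_eq_mul_inv, div_le_div_iff₀ (by positivity) (by positivity)]
      exact h η
    refine h1.trans ?_
    gcongr
    rcases abs_cases η with ⟨e, _⟩ | ⟨e, _⟩
    · rw [e]; exact le_add_of_nonneg_right (by positivity)
    · rw [e, show (-η - s) ^ 2 = (η - (-s)) ^ 2 by ring]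
      exact le_add_of_nonneg_left (by positivity)
  have i1 := bump_integral R s hR
  have i2 := bump_integral R (-s) hR
  have I : Integrable fun η : ℝ => 4 * (((η - s) ^ 2 + 1 / R)⁻¹ + ((η - (-s)) ^ 2 + 1 / R)⁻¹) :=
    (i1.1.add i2.1).const_mul 4
  have hc : Continuous (fun η : ℝ => (R ^ 2 + η ^ 2) / ((y + 3 * η ^ 2) ^ 2 + R)) :=
    Continuous.div (by fun_prop) (by fun_prop) (fun η => by positivity)
  have I' : Integrable (fun η : ℝ => (R ^ 2 + η ^ 2) / ((y + 3 * η ^ 2) ^ 2 + R)) := by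
    refine I.mono' hc.aestronglyMeasurable (.of_forall fun η => ?_)
    rw [Real.norm_of_nonneg (by positivity)]
    exact hb η
  refine ⟨R, hR, hy, I', (integral_mono I' I hb).trans ?_⟩
  rw [integral_const_mul, integral_add i1.1 i2.1, i1.2, i2.2]
  exact le_of_eq (by ring)

/-! ### Integration by parts against the regularised amplitude -/

theorem amplitude_hasDerivAt {y R : ℝ} (hR : 1 ≤ R) {m m' : ℝ → ℝ}
    (hm : ∀ η, HasDerivAt m (m' η) η) (η : ℝ) :
    HasDerivAt (fun η => m η * (y + 3 * η ^ 2) / ((y + 3 * η ^ 2) ^ 2 + R))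
      (m' η * (y + 3 * η ^ 2) / ((y + 3 * η ^ 2) ^ 2 + R) +
        6 * m η * η * (R - (y + 3 * η ^ 2) ^ 2) / ((y + 3 * η ^ 2) ^ 2 + R) ^ 2) η := by
  have hP : HasDerivAt (fun η : ℝ => y + 3 * η ^ 2) (6 * η) η := by
    refine (((hasDerivAt_pow 2 η).const_mul 3).const_add y).congr_deriv ?_
    norm_num; ring
  have hD : (y + 3 * η ^ 2) ^ 2 + R ≠ 0 := by positivity
  refine (((hm η).mul hP).div ((hP.pow 2).add_const R) hD).congr_deriv ?_
  simp only [Pi.mul_apply, Pi.pow_apply]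
  field_simp
  push_cast
  ring

/-- Oscillatory integral estimate for the phase `φ(η) = yη + η³` and a real multiplier `m`.
With `a = m φ' / (φ'² + R)`, the function `m - a φ' = m R / (φ'² + R)` is integrable, and `e^{iφ} a φ'` can
be integrated by parts; `B` measures the three resulting amplitudes against the weight
`(R² + η²) / (φ'² + R)`, whose integral is at most `W`. -/
theorem oscillatory_bound {y R ε B W : ℝ} (hR : 1 ≤ R) (hε : 0 ≤ ε) (hB : 0 ≤ B)
    (hw : Integrable (fun η : ℝ => (R ^ 2 + η ^ 2) / ((y + 3 * η ^ 2) ^ 2 + R)))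
    (hW : ∫ η : ℝ, (R ^ 2 + η ^ 2) / ((y + 3 * η ^ 2) ^ 2 + R) ≤ W)
    {m m' : ℝ → ℝ} (hm : ∀ η, HasDerivAt m (m' η) η) (hm' : Continuous m')
    (b1 : ∀ η, R * |m η| ≤ B * (R ^ 2 + η ^ 2))
    (b2 : ∀ η, |m' η| * |y + 3 * η ^ 2| + 6 * |m η| * |η| ≤ B * (R ^ 2 + η ^ 2))
    (b3 : ∀ η, m η ^ 2 ≤ B ^ 2 * (R ^ 2 + η ^ 2))
    {H H' : ℝ → ℂ} (hH : ∀ η, HasDerivAt H (H' η) η)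
    (hmH : Integrable (fun η => (m η : ℂ) * H η))
    (hHb : ∀ η, ‖H η‖ ≤ ε) (hL : MemLp H' 2) (hLb : ∫ η, ‖H' η‖ ^ 2 ≤ ε ^ 2) :
    ‖∫ η : ℝ, Complex.exp (Complex.I * (y * η + η ^ 3)) * m η * H η‖
      ≤ ε * B * (2 * W + Real.sqrt W) := by
  have hmc : Continuous m := continuous_iff_continuousAt.2 fun η => (hm η).continuousAt
  have hHc : Continuous H := continuous_iff_continuousAt.2 fun η => (hH η).continuousAt
  have hD (η : ℝ) : 0 < (y + 3 * η ^ 2) ^ 2 + R := by positivity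
  set E : ℝ → ℂ := fun η => Complex.exp (Complex.I * (y * η + η ^ 3)) with hE
  have hEc : Continuous E := by rw [hE]; fun_prop
  have hEn (η : ℝ) : ‖E η‖ = 1 := by
    have : Complex.I * (y * η + η ^ 3) = ((y * η + η ^ 3 : ℝ) : ℂ) * Complex.I := by
      push_cast; ring
    simp only [hE]
    rw [this, Complex.norm_exp_ofReal_mul_I]
  have hEd (η : ℝ) : HasDerivAt E (E η * (Complex.I * (y + 3 * η ^ 2 : ℝ))) η := by
    have h1 : HasDerivAt (fun η : ℝ => (((y * η + η ^ 3 : ℝ)) : ℂ)) ((y + 3 * η ^ 2 : ℝ) : ℂ) η := by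
      apply HasDerivAt.ofReal_comp
      refine (((hasDerivAt_id η).const_mul y).add (hasDerivAt_pow 3 η)).congr_deriv ?_
      norm_num
    convert (h1.const_mul Complex.I).cexp using 1
    · funext z; simp [hE]
    · simp [hE]
  set w : ℝ → ℝ := fun η => (R ^ 2 + η ^ 2) / ((y + 3 * η ^ 2) ^ 2 + R) with hwdef
  set r : ℝ → ℝ := fun η => m η * R / ((y + 3 * η ^ 2) ^ 2 + R) with hr
  set a : ℝ → ℝ := fun η => m η * (y + 3 * η ^ 2) / ((y + 3 * η ^ 2) ^ 2 + R) with ha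
  set a' : ℝ → ℝ := fun η => m' η * (y + 3 * η ^ 2) / ((y + 3 * η ^ 2) ^ 2 + R) +
        6 * m η * η * (R - (y + 3 * η ^ 2) ^ 2) / ((y + 3 * η ^ 2) ^ 2 + R) ^ 2 with ha'
  have had (η : ℝ) : HasDerivAt a (a' η) η := amplitude_hasDerivAt hR hm η
  have hrc : Continuous r := Continuous.div (by fun_prop) (by fun_prop) fun η => (hD η).ne'
  have hac : Continuous a := Continuous.div (by fun_prop) (by fun_prop) fun η => (hD η).ne'
  have ha'c : Continuous a' :=
    (Continuous.div (by fun_prop) (by fun_prop) fun η => (hD η).ne').add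
      (Continuous.div (by fun_prop) (by fun_prop) fun η => (pow_pos (hD η) 2).ne')
  -- pointwise bounds on the three amplitudes
  have hrb (η : ℝ) : |r η| ≤ B * w η := by
    simp only [hr, hwdef]
    rw [abs_div, abs_of_pos (hD η), ← mul_div_assoc, abs_mul, abs_of_pos (by linarith : 0 < R)]
    gcongr ?_ / _
    linarith [b1 η]
  have ha'b (η : ℝ) : |a' η| ≤ B * w η := by
    simp only [ha', hwdef]
    have hq : |R - (y + 3 * η ^ 2) ^ 2| ≤ (y + 3 * η ^ 2) ^ 2 + R :=
      abs_le.2 ⟨by nlinarith [sq_nonneg (y + 3 * η ^ 2)], by nlinarith [sq_nonneg (y + 3 * η ^ 2)]⟩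
    calc _ ≤ _ := abs_add_le _ _
      _ ≤ |m' η| * |y + 3 * η ^ 2| / ((y + 3 * η ^ 2) ^ 2 + R)
          + 6 * |m η| * |η| / ((y + 3 * η ^ 2) ^ 2 + R) := by
        gcongr ?_ + ?_
        · rw [abs_div, abs_of_pos (hD η), abs_mul]
        · rw [abs_div, abs_of_pos (pow_pos (hD η) 2), abs_mul, abs_mul, abs_mul,
            abs_of_pos (by norm_num : (0 : ℝ) < 6),
            div_le_div_iff₀ (pow_pos (hD η) 2) (hD η), pow_two ((y + 3 * η ^ 2) ^ 2 + R),
            ← mul_assoc]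
          have := hD η
          gcongr
      _ ≤ _ := by
        rw [← add_div, ← mul_div_assoc]
        have := hD η
        gcongr
        exact b2 η
  have hab (η : ℝ) : a η ^ 2 ≤ B ^ 2 * w η := by
    simp only [ha, hwdef]
    rw [div_pow, mul_pow, ← mul_div_assoc, div_le_div_iff₀ (pow_pos (hD η) 2) (hD η),
      pow_two ((y + 3 * η ^ 2) ^ 2 + R), ← mul_assoc]
    have := hD η
    gcongr
    · exact b3 η
    · linarith
  have ham (η : ℝ) : |a η| ≤ |m η| := by
    simp only [ha]
    rw [abs_div, abs_of_pos (hD η), abs_mul, mul_div_assoc]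
    refine mul_le_of_le_one_right (abs_nonneg _) ?_
    rw [div_le_one (hD η), ← sq_abs (y + 3 * η ^ 2)]
    nlinarith [sq_nonneg (|y + 3 * η ^ 2| - 1), abs_nonneg (y + 3 * η ^ 2)]
  -- the three terms remaining after the integration by parts
  set f1 : ℝ → ℂ := fun η => E η * r η * H η with hf1
  set f2 : ℝ → ℂ := fun η => E η * a' η * H η with hf2
  set f3 : ℝ → ℂ := fun η => E η * (a η * H' η) with hf3
  have hw0 (η : ℝ) : 0 ≤ w η := by simp only [hwdef]; have := hD η; positivity
  have n1 (η : ℝ) : ‖f1 η‖ ≤ ε * B * w η := by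
    simp only [hf1]
    rw [norm_mul, norm_mul, hEn, one_mul, Complex.norm_real, Real.norm_eq_abs, mul_assoc,
      mul_comm ε]
    exact mul_le_mul (hrb η) (hHb η) (norm_nonneg _) (mul_nonneg hB (hw0 η)) |>.trans_eq (by ring)
  have n2 (η : ℝ) : ‖f2 η‖ ≤ ε * B * w η := by
    simp only [hf2]
    rw [norm_mul, norm_mul, hEn, one_mul, Complex.norm_real, Real.norm_eq_abs, mul_assoc,
      mul_comm ε]
    exact mul_le_mul (ha'b η) (hHb η) (norm_nonneg _) (mul_nonneg hB (hw0 η)) |>.trans_eq (by ring)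
  have hwi : Integrable fun η => ε * B * w η := hw.const_mul _
  have i1 : Integrable f1 := hwi.mono' (by fun_prop) (.of_forall n1)
  have i2 : Integrable f2 := hwi.mono' (by fun_prop) (.of_forall n2)
  have ha2 : Integrable fun η => a η ^ 2 := by
    refine (hw.const_mul (B ^ 2)).mono' (by fun_prop) (.of_forall fun η => ?_)
    rw [Real.norm_of_nonneg (sq_nonneg _)]
    exact hab η
  have haL : MemLp a 2 := (memLp_two_iff_integrable_sq hac.aestronglyMeasurable).2 ha2
  have haLc : MemLp (fun η => (a η : ℂ)) 2 := haL.ofReal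
  have i3' : Integrable fun η => (a η : ℂ) * H' η := haLc.integrable_mul hL
  have i3 : Integrable f3 :=
    i3'.bdd_mul (c := 1) hEc.aestronglyMeasurable (.of_forall fun η => (hEn η).le)
  have i0 : Integrable fun η => E η * m η * H η := by
    have := hmH.bdd_mul (c := 1) hEc.aestronglyMeasurable (.of_forall fun η => (hEn η).le)
    simpa only [mul_assoc] using this
  have iF : Integrable fun η => E η * a η * H η := by
    refine hmH.norm.mono' (by fun_prop) (.of_forall fun η => ?_)
    rw [norm_mul, norm_mul, norm_mul, hEn, one_mul, Complex.norm_real, Complex.norm_real]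
    exact mul_le_mul_of_nonneg_right (ham η) (norm_nonneg _)
  have hF (η : ℝ) : HasDerivAt (fun η => E η * a η * H η)
      (Complex.I * (E η * m η * H η) - Complex.I * f1 η + f2 η + f3 η) η := by
    refine (((hEd η).mul (had η).ofReal_comp).mul (hH η)).congr_deriv ?_
    have hmr : m η = r η + a η * (y + 3 * η ^ 2) := by
      have := (hD η).ne'
      simp only [hr, ha]; field_simp; ring
    simp only [hf1, hf2, hf3, Pi.mul_apply]
    rw [hmr]
    push_cast
    ring
  have j1 : Integrable fun η => Complex.I * (E η * m η * H η) - Complex.I * f1 η :=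
    (i0.const_mul _).sub (i1.const_mul _)
  have j2 : Integrable fun η => Complex.I * (E η * m η * H η) - Complex.I * f1 η + f2 η :=
    j1.add i2
  have iF' : Integrable fun η =>
      Complex.I * (E η * m η * H η) - Complex.I * f1 η + f2 η + f3 η := j2.add i3
  have hz := integral_eq_zero_of_hasDerivAt_of_integrable hF iF' iF
  rw [integral_add j2 i3, integral_add j1 i2, integral_sub (i0.const_mul _) (i1.const_mul _), integral_const_mul, integral_const_mul] at hz
  have hsplit : ∫ η, E η * m η * H η =
      (∫ η, f1 η) + Complex.I * (∫ η, f2 η) + Complex.I * ∫ η, f3 η := by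
    linear_combination (-Complex.I) * hz + ((∫ η, E η * m η * H η) - ∫ η, f1 η) * Complex.I_sq
  have hwW : ∫ η, ε * B * w η ≤ ε * B * W := by
    rw [integral_const_mul]; gcongr
  have N1 : ‖∫ η, f1 η‖ ≤ ε * B * W :=
    (norm_integral_le_of_norm_le hwi (.of_forall n1)).trans hwW
  have N2 : ‖∫ η, f2 η‖ ≤ ε * B * W :=
    (norm_integral_le_of_norm_le hwi (.of_forall n2)).trans hwW
  have N3 : ‖∫ η, f3 η‖ ≤ ε * B * Real.sqrt W := by
    have c1 : ‖∫ η, f3 η‖ ≤ ∫ η, ‖(a η : ℂ)‖ * ‖H' η‖ := by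
      refine (norm_integral_le_integral_norm _).trans_eq (integral_congr_ae (.of_forall fun η => ?_))
      simp only [hf3, norm_mul, hEn, one_mul]
    have c2 := integral_mul_norm_le_Lp_mul_Lq (μ := volume) (f := fun η => (a η : ℂ)) (g := H')
      Real.HolderConjugate.two_two (by simpa using haLc) (by simpa using hL)
    simp only [Real.rpow_ofNat, ← Real.sqrt_eq_rpow] at c2
    have c3 : ∫ η, ‖(a η : ℂ)‖ ^ 2 ≤ B ^ 2 * W := by
      calc ∫ η, ‖(a η : ℂ)‖ ^ 2 = ∫ η, a η ^ 2 := by simp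
        _ ≤ ∫ η, B ^ 2 * w η := integral_mono ha2 (hw.const_mul _) hab
        _ ≤ _ := by rw [integral_const_mul]; gcongr
    calc _ ≤ _ := c1.trans c2
      _ ≤ Real.sqrt (B ^ 2 * W) * Real.sqrt (ε ^ 2) := by gcongr
      _ = _ := by
        rw [Real.sqrt_mul (sq_nonneg B), Real.sqrt_sq hB, Real.sqrt_sq hε]; ring
  rw [hsplit]
  calc _ ≤ ‖∫ η, f1 η‖ + ‖∫ η, f2 η‖ + ‖∫ η, f3 η‖ := by
        refine (norm_add₃_le).trans_eq ?_
        simp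
    _ ≤ _ := by linarith

/-- The estimate at unit time. The multiplier `1` satisfies `oscillatory_bound` with `B = 3 / R` and
the multiplier `η` with `B = 9`; as `W` is of size `√R`, the two integrals are of size
`ε R^{-1/2}` and `ε R^{1/2}`. -/
theorem product_bound (y ε : ℝ) (hε : 0 ≤ ε)
    {H H' : ℝ → ℂ} (hH : ∀ η, HasDerivAt H (H' η) η)
    (hHi : Integrable H) (hHi' : Integrable (fun η : ℝ => (η : ℂ) * H η))
    (hHb : ∀ η, ‖H η‖ ≤ ε) (hL : MemLp H' 2) (hLb : ∫ η, ‖H' η‖ ^ 2 ≤ ε ^ 2) :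
    ‖∫ η : ℝ, Complex.exp (Complex.I * (y * η + η ^ 3)) * H η‖ *
      ‖∫ η : ℝ, Complex.exp (Complex.I * (y * η + η ^ 3)) * η * H η‖
      ≤ 15552 * π ^ 2 * ε ^ 2 := by
  obtain ⟨R, hR, hy, hw, hW⟩ := weight_bound y
  have hR0 : 0 < R := by linarith
  set W := 8 * π * Real.sqrt R with hWdef
  have hsR : 1 ≤ Real.sqrt R := Real.one_le_sqrt.2 hR
  have hW1 : 1 ≤ W := by nlinarith [Real.pi_gt_three]
  have hsW : Real.sqrt W ≤ W := by
    rw [Real.sqrt_le_left (by linarith)]; nlinarith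
  have A := oscillatory_bound (y := y) (B := 3 / R) (m := fun _ => 1) (m' := fun _ => 0)
    hR hε (by positivity) hw hW (fun η => hasDerivAt_const η 1) continuous_const
    (fun η => by
      rw [div_mul_eq_mul_div, le_div_iff₀ hR0]
      simp only [abs_one]; nlinarith [sq_nonneg η])
    (fun η => by
      rw [div_mul_eq_mul_div, le_div_iff₀ hR0, ← sq_abs η]
      simp only [abs_one, abs_zero]; nlinarith [sq_nonneg (|η| - R)])
    (fun η => by
      rw [div_pow, div_mul_eq_mul_div, le_div_iff₀ (by positivity)]
      nlinarith [sq_nonneg η])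
    hH (by simpa using hHi) hHb hL hLb
  have A' := oscillatory_bound (y := y) (B := 9) (m := fun η => η) (m' := fun _ => 1)
    hR hε (by positivity) hw hW (fun η => hasDerivAt_id' η) continuous_const
    (fun η => by
      rw [← sq_abs η]; nlinarith [sq_nonneg (|η| - R), sq_nonneg (|η| + R)])
    (fun η => by
      have : |y + 3 * η ^ 2| ≤ R ^ 2 + 3 * η ^ 2 :=
        (abs_add_le _ _).trans (add_le_add hy (abs_of_nonneg (by positivity)).le)
      have e : |η| * |η| = η ^ 2 := by rw [← sq_abs η]; ring
      rw [mul_assoc, e, abs_one]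
      nlinarith [sq_nonneg R, sq_nonneg η])
    (fun η => by nlinarith [sq_nonneg R, sq_nonneg η])
    hH hHi' hHb hL hLb
  simp only [Complex.ofReal_one, mul_one] at A
  have hW2 : W ^ 2 = 64 * π ^ 2 * R := by
    rw [hWdef, mul_pow, Real.sq_sqrt hR0.le]; ring
  calc _ ≤ (ε * (3 / R) * (2 * W + Real.sqrt W)) * (ε * 9 * (2 * W + Real.sqrt W)) := by gcongr
    _ ≤ (ε * (3 / R) * (2 * W + W)) * (ε * 9 * (2 * W + W)) := by gcongr
    _ = 243 / R * W ^ 2 * ε ^ 2 := by ring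
    _ = _ := by rw [hW2]; field_simp; ring

/-! ### The Fourier transform of a Schwartz function -/

open FourierTransform in
theorem FT_eq_fourier (f : SchwartzMap ℝ ℂ) (ξ : ℝ) :
    FT f ξ = (Real.sqrt (2 * Real.pi) : ℂ)⁻¹ * (𝓕 f) ((2 * π)⁻¹ * ξ) := by
  rw [FT, SchwartzMap.fourier_coe, Real.fourier_real_eq_integral_exp_smul]
  congr 1
  refine integral_congr_ae (.of_forall fun x => ?_)
  simp only [smul_eq_mul]
  congr 2
  have : (-2 * π * x * ((2 * π)⁻¹ * ξ) : ℝ) = -(x * ξ) := by field_simp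
  rw [this]
  push_cast
  ring

open FourierTransform in
/-- Plancherel for `x f`, whose Fourier transform is the derivative of `𝓕 f` up to a constant. -/
theorem integral_norm_sq_deriv_fourier (f : SchwartzMap ℝ ℂ) :
    ∫ ξ, ‖deriv (⇑(𝓕 f : SchwartzMap ℝ ℂ)) ξ‖ ^ 2 = (2 * π) ^ 2 * ∫ x : ℝ, ‖(x : ℂ) * f x‖ ^ 2 := by
  have hx : Function.HasTemperateGrowth (fun x : ℝ => inner ℝ x (1 : ℝ)) := by fun_prop
  have h1 (ξ : ℝ) : deriv (⇑(𝓕 f : SchwartzMap ℝ ℂ)) ξ =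
      (𝓕 (-(2 * π * I) • (SchwartzMap.smulLeftCLM ℂ fun x : ℝ => inner ℝ x (1 : ℝ)) f)) ξ := by
    rw [← SchwartzMap.lineDerivOp_fourier_eq f (1 : ℝ), SchwartzMap.lineDerivOp_apply_eq_fderiv]
    simp
  simp_rw [h1]
  rw [SchwartzMap.integral_norm_sq_fourier, ← integral_const_mul]
  refine integral_congr_ae (.of_forall fun x => ?_)
  simp only [SchwartzMap.smul_apply, SchwartzMap.smulLeftCLM_apply_apply hx]
  simp [mul_pow, abs_of_pos Real.pi_pos]

open FourierTransform in
theorem FT_bddAbove (f : SchwartzMap ℝ ℂ) : BddAbove (Set.range fun ξ => ‖FT f ξ‖) := by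
  obtain ⟨C, _, hC⟩ := (𝓕 f).decay 0 0
  refine ⟨‖(Real.sqrt (2 * Real.pi) : ℂ)⁻¹‖ * C, ?_⟩
  rintro _ ⟨ξ, rfl⟩
  simp only [FT_eq_fourier, norm_mul]
  gcongr
  simpa using hC ((2 * π)⁻¹ * ξ)

open FourierTransform in
/-- The estimate for `H(η) = FT f (τ η)`. The scaling gives `‖H'‖₂² = τ ‖x f‖₂²`, which is where the
factor `√τ` in the hypothesis comes from. -/
theorem rescaled_bound (f : SchwartzMap ℝ ℂ) {τ ε : ℝ} (hτ : 0 < τ)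
    (h2 : Real.sqrt τ * L2norm (fun x => (x : ℂ) * f x) ≤ ε) (hinf : LinfNorm (FT f) ≤ ε) (y : ℝ) :
    ‖∫ η : ℝ, Complex.exp (Complex.I * (y * η + η ^ 3)) * FT f (τ * η)‖ *
      ‖∫ η : ℝ, Complex.exp (Complex.I * (y * η + η ^ 3)) * η * FT f (τ * η)‖
      ≤ 15552 * π ^ 2 * ε ^ 2 := by
  have hL0 : 0 ≤ L2norm (fun x => (x : ℂ) * f x) := Real.sqrt_nonneg _
  have hε : 0 ≤ ε := le_trans (by positivity) h2
  set c : ℂ := (Real.sqrt (2 * Real.pi) : ℂ)⁻¹ with hc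
  have hcn : ‖c‖ ^ 2 = (2 * π)⁻¹ := by
    rw [hc, norm_inv, Complex.norm_real, Real.norm_of_nonneg (Real.sqrt_nonneg _), inv_pow,
      Real.sq_sqrt (by positivity)]
  set k : ℝ := (2 * π)⁻¹ * τ with hk
  have hk0 : 0 < k := by positivity
  set G : SchwartzMap ℝ ℂ := 𝓕 f with hG
  have hFT (η : ℝ) : FT f (τ * η) = c * G (k * η) := by
    rw [FT_eq_fourier, hk, mul_assoc, hG]
  have hdc : Continuous (deriv G) := (SchwartzMap.derivCLM ℝ ℂ G).continuous
  have hd2 : MemLp (deriv G) 2 := (SchwartzMap.derivCLM ℝ ℂ G).memLp 2 volume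
  have hcont : Continuous fun η : ℝ => c * (k * deriv G (k * η)) := by fun_prop
  have hsq (η : ℝ) : ‖c * (k * deriv G (k * η))‖ ^ 2 =
      ((2 * π)⁻¹ * k ^ 2) * ‖deriv G (k * η)‖ ^ 2 := by
    rw [norm_mul, norm_mul, mul_pow, mul_pow, hcn, Complex.norm_real, Real.norm_of_nonneg hk0.le]
    ring
  have hsqi : Integrable fun η => ‖deriv G η‖ ^ 2 :=
    (memLp_two_iff_integrable_sq_norm hdc.aestronglyMeasurable).1 hd2
  have e1 : Integrable G := G.integrable
  have e2 : Integrable fun η : ℝ => (η : ℂ) * G η := by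
    refine (G.integrable_pow_mul volume 1).mono' ?_ (.of_forall fun η => ?_)
    · exact (by fun_prop : Continuous fun η : ℝ => (η : ℂ) * G η).aestronglyMeasurable
    · simp
  simp only [hFT]
  refine product_bound y ε hε (H' := fun η => c * (k * deriv G (k * η))) ?_
    ((e1.comp_mul_left' hk0.ne').const_mul c) ?_ ?_ ?_ ?_
  · intro η
    have := (G.hasDerivAt (k * η)).scomp η ((hasDerivAt_id η).const_mul k)
    refine (this.const_mul c).congr_deriv ?_
    simp
  · refine ((e2.comp_mul_left' hk0.ne').const_mul (c * (k : ℂ)⁻¹)).congr (.of_forall fun η => ?_)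
    have : (k : ℂ) ≠ 0 := by exact_mod_cast hk0.ne'
    push_cast
    field_simp
  · intro η
    rw [← hFT]
    exact (le_ciSup (FT_bddAbove f) (τ * η)).trans hinf
  · rw [memLp_two_iff_integrable_sq_norm hcont.aestronglyMeasurable]
    simp only [hsq]
    exact (hsqi.comp_mul_left' hk0.ne').const_mul _
  · simp only [hsq]
    rw [integral_const_mul, Measure.integral_comp_mul_left (fun η => ‖deriv G η‖ ^ 2),
      integral_norm_sq_deriv_fourier, abs_of_pos (by positivity), smul_eq_mul]
    have hL : L2norm (fun x => (x : ℂ) * f x) ^ 2 = ∫ x : ℝ, ‖(x : ℂ) * f x‖ ^ 2 :=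
      Real.sq_sqrt (integral_nonneg fun x => by positivity)
    rw [← hL]
    have h3 : (Real.sqrt τ * L2norm (fun x => (x : ℂ) * f x)) ^ 2 ≤ ε ^ 2 := by gcongr
    rw [mul_pow, Real.sq_sqrt hτ.le] at h3
    refine le_trans (le_of_eq ?_) h3
    rw [hk]
    field_simp

/-- Lemma 2.3 (bilinear estimate). -/
theorem airy_bilinear :
    ∃ C : ℝ, 0 < C ∧
      ∀ (ε₁ : ℝ) (f : ℝ → SchwartzMap ℝ ℂ),
        (∀ t : ℝ, 1 ≤ t →
            t ^ (-(1:ℝ)/6) * L2norm (fun x => (x : ℂ) * f t x) + LinfNorm (FT ⇑(f t)) ≤ ε₁) →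
        ∀ t : ℝ, 1 ≤ t →
          t * LinfNorm (fun x => uAiry (⇑(f t)) t x * derivAiry (⇑(f t)) t x) ≤ C * ε₁ ^ 2 := by
  refine ⟨15552 * π ^ 2, by positivity, fun ε f hyp t ht => ?_⟩
  have ht0 : 0 < t := by linarith
  have h := hyp t ht
  have hinf0 : 0 ≤ LinfNorm (FT ⇑(f t)) := Real.iSup_nonneg fun _ => norm_nonneg _
  have hL0 : 0 ≤ L2norm (fun x => (x : ℂ) * f t x) := Real.sqrt_nonneg _
  set τ : ℝ := t ^ (-(1:ℝ)/3) with hτdef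
  have hτ : 0 < τ := Real.rpow_pos_of_pos ht0 _
  have hτs : Real.sqrt τ = t ^ (-(1:ℝ)/6) := by
    rw [Real.sqrt_eq_rpow, hτdef, ← Real.rpow_mul ht0.le]; norm_num
  have hτ3 : t * τ ^ 3 = 1 := by
    rw [hτdef, ← Real.rpow_natCast, ← Real.rpow_mul ht0.le]
    norm_num
    rw [Real.rpow_neg_one, mul_inv_cancel₀ ht0.ne']
  rw [← hτs] at h
  have hcn : ‖(Real.sqrt (2 * Real.pi) : ℂ)⁻¹‖ ^ 2 ≤ 1 := by
    rw [norm_inv, Complex.norm_real, Real.norm_of_nonneg (Real.sqrt_nonneg _), inv_pow,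
      Real.sq_sqrt (by positivity)]
    exact inv_le_one_of_one_le₀ (by linarith [Real.pi_gt_three])
  have hscale (g : ℝ → ℂ) : ∫ ξ, g ξ = (τ : ℂ) * ∫ η, g (τ * η) := by
    rw [Measure.integral_comp_mul_left g τ, abs_of_pos (by positivity), Complex.real_smul,
      ← mul_assoc, ← Complex.ofReal_mul, mul_inv_cancel₀ hτ.ne', Complex.ofReal_one, one_mul]
  have hτ3c : (t : ℂ) * (τ : ℂ) ^ 3 = 1 := by exact_mod_cast hτ3
  rw [mul_comm t, ← le_div_iff₀ ht0]
  refine ciSup_le fun x => ?_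
  rw [le_div_iff₀ ht0, mul_comm]
  have hb := rescaled_bound (f t) hτ (ε := ε)
    (by linarith) (by have := mul_nonneg (Real.sqrt_nonneg τ) hL0; linarith) (τ * x)
  have hph (η : ℝ) : Complex.I * (x * ((τ * η : ℝ) : ℂ) + t * ((τ * η : ℝ) : ℂ) ^ 3) =
      Complex.I * (((τ * x : ℝ) : ℂ) * η + (η : ℂ) ^ 3) := by
    push_cast
    linear_combination (Complex.I * (η : ℂ) ^ 3) * hτ3c
  have hu : uAiry (f t) t x = (Real.sqrt (2 * Real.pi) : ℂ)⁻¹ * (τ *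
      ∫ η : ℝ, Complex.exp (Complex.I * (((τ * x : ℝ) : ℂ) * η + η ^ 3)) * FT (f t) (τ * η)) := by
    rw [uAiry, hscale]
    simp only [hph]
  have hu' : derivAiry (f t) t x = (Real.sqrt (2 * Real.pi) : ℂ)⁻¹ * (τ * ((Complex.I * τ) *
      ∫ η : ℝ, Complex.exp (Complex.I * (((τ * x : ℝ) : ℂ) * η + η ^ 3)) * η * FT (f t) (τ * η))) := by
    rw [derivAiry, hscale, ← integral_const_mul (Complex.I * (τ : ℂ))]
    simp only [hph]
    congr 2
    refine integral_congr_ae (.of_forall fun η => ?_)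
    push_cast
    ring
  beta_reduce
  rw [hu, hu']
  simp only [norm_mul, Complex.norm_I, one_mul, Complex.norm_real τ, Real.norm_of_nonneg hτ.le]
  set A := ‖∫ η : ℝ, Complex.exp (Complex.I * (((τ * x : ℝ) : ℂ) * η + η ^ 3)) * FT (f t) (τ * η)‖
  set B := ‖∫ η : ℝ, Complex.exp (Complex.I * (((τ * x : ℝ) : ℂ) * η + η ^ 3)) * η * FT (f t) (τ * η)‖
  set q := ‖(Real.sqrt (2 * Real.pi) : ℂ)⁻¹‖
  calc t * (q * (τ * A) * (q * (τ * (τ * B)))) = q ^ 2 * ((t * τ ^ 3) * (A * B)) := by ring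
    _ ≤ 1 * (1 * (A * B)) := by rw [hτ3]; gcongr
    _ ≤ _ := by linarith
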